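/- The fcc and hcp lattices have the following shell-count differences: #{k ∈ L_fcc : |k| = √(8/3)} − #{k ∈ L_hcp : |k| = √(8/3)} = −2 (indeed L_fcc contains no point of norm √(8/3) while L_hcp contains exactly 2), and #{k ∈ L_fcc : |k| = √3} − #{k ∈ L_hcp : |k| = √3} = 6 (indeed L_fcc contains exactly 24 points of norm √3 while L_hcp contains exactly 18). -/

import Mathlib

/-!
In units of `1 / (3√2)` every point of either lattice has integer coordinates, so the shells of
radius `√(8/3)` and `√3` correspond to integer vectors of squared length `48` and `54`
(`norm_scaledPoint_eq_iff`), and distinct integer vectors give distinct points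
(`scaledPoint_injective`).

The squared length is a positive definite quadratic polynomial in the lattice coefficients, so
squared length at most `54` bounds each coefficient by `3` in absolute value
(`mem_coeffBox_fcc`, `mem_coeffBox_hcp`, `mem_coeffBox_hcpShift`). Each shell is therefore the
image of an explicit finite set of integer vectors (`fcc_shell_eq`, `hcp_shell_eq`), whose
cardinality is evaluated by computation.
-/

open scoped BigOperators
open scoped Classical

noncomputable section

abbrev E3 := EuclideanSpace ℝ (Fin 3)

/-- Interpret a plain vector in `Fin 3 → ℝ` as a point of Euclidean 3-space. -/
def toE3 (v : Fin 3 → ℝ) : E3 := (WithLp.equiv 2 (Fin 3 → ℝ)).symm v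

/-- The basis vectors `b₁ = (0,1,1)/√2`, `b₂ = (1,0,1)/√2`, `b₃ = (1,1,0)/√2` of the
face-centered cubic lattice. -/
def fccB : Fin 3 → E3 := fun i =>
  (Real.sqrt 2)⁻¹ • toE3 (![![(0:ℝ),1,1], ![1,0,1], ![1,1,0]] i)

/-- The face-centered cubic lattice `L_fcc`. -/
def Lfcc : Set E3 := {x | ∃ a : Fin 3 → ℤ, x = ∑ i, (a i : ℝ) • fccB i}

/-- The extra basis vector `b̃₃ = (2√2/3)·(1,1,−1)` of the hcp lattice. -/
def tb3 : E3 := ((2 * Real.sqrt 2) / 3) • toE3 ![1, 1, -1]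

/-- The hexagonal close-packed lattice `L_hcp = {0, b₃} + (b₁ b₂ b̃₃)·ℤ³`. -/
def Lhcp : Set E3 :=
  {x | ∃ a : Fin 3 → ℤ,
    x = (a 0 : ℝ) • fccB 0 + (a 1 : ℝ) • fccB 1 + (a 2 : ℝ) • tb3 ∨
    x = fccB 2 + ((a 0 : ℝ) • fccB 0 + (a 1 : ℝ) • fccB 1 + (a 2 : ℝ) • tb3)}

/-- The point `(p, q, r) / (3√2)`. Both lattices consist of such points with integer `p, q, r`. -/
def scaledPoint (v : ℤ × ℤ × ℤ) : E3 :=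
  toE3 ![(3 * Real.sqrt 2)⁻¹ * v.1, (3 * Real.sqrt 2)⁻¹ * v.2.1, (3 * Real.sqrt 2)⁻¹ * v.2.2]

/-- The squared Euclidean length of an integer vector. -/
def sqLen (v : ℤ × ℤ × ℤ) : ℤ := v.1 ^ 2 + v.2.1 ^ 2 + v.2.2 ^ 2

/-- Integer coordinates, in units of `1 / (3√2)`, of `a b₁ + b b₂ + c b₃`. -/
def fccCoord (a : ℤ × ℤ × ℤ) : ℤ × ℤ × ℤ :=
  (3 * a.2.1 + 3 * a.2.2, 3 * a.1 + 3 * a.2.2, 3 * a.1 + 3 * a.2.1)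

/-- Integer coordinates, in units of `1 / (3√2)`, of `a b₁ + b b₂ + c b̃₃`. -/
def hcpCoord (a : ℤ × ℤ × ℤ) : ℤ × ℤ × ℤ :=
  (3 * a.2.1 + 4 * a.2.2, 3 * a.1 + 4 * a.2.2, 3 * a.1 + 3 * a.2.1 - 4 * a.2.2)

/-- Integer coordinates, in units of `1 / (3√2)`, of `b₃ + a b₁ + b b₂ + c b̃₃`. -/
def hcpShiftCoord (a : ℤ × ℤ × ℤ) : ℤ × ℤ × ℤ :=
  (3 + 3 * a.2.1 + 4 * a.2.2, 3 + 3 * a.1 + 4 * a.2.2, 3 * a.1 + 3 * a.2.1 - 4 * a.2.2)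

/-- The coefficient triples with `|aᵢ| ≤ 3`. -/
def coeffBox : Finset (ℤ × ℤ × ℤ) :=
  Finset.Icc (-3) 3 ×ˢ Finset.Icc (-3) 3 ×ˢ Finset.Icc (-3) 3

/-- The fcc vectors, in scaled coordinates, of squared length `n` with coefficients in the box. -/
def fccShell (n : ℤ) : Finset (ℤ × ℤ × ℤ) :=
  (coeffBox.filter fun a => sqLen (fccCoord a) = n).image fccCoord

/-- The hcp vectors, in scaled coordinates, of squared length `n` with coefficients in the box. -/
def hcpShell (n : ℤ) : Finset (ℤ × ℤ × ℤ) :=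
  (coeffBox.filter fun a => sqLen (hcpCoord a) = n).image hcpCoord ∪
    (coeffBox.filter fun a => sqLen (hcpShiftCoord a) = n).image hcpShiftCoord

lemma scaledPoint_injective : Function.Injective scaledPoint := by
  rintro ⟨p, q, r⟩ ⟨p', q', r'⟩ h
  have hs : (3 * Real.sqrt 2)⁻¹ ≠ 0 := by positivity
  have h0 := congrArg (fun x : E3 => x 0) h
  have h1 := congrArg (fun x : E3 => x 1) h
  have h2 := congrArg (fun x : E3 => x 2) h
  simp only [scaledPoint, toE3, WithLp.equiv_symm_apply, Matrix.cons_val] at h0 h1 h2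
  have h0' := mul_left_cancel₀ hs h0
  have h1' := mul_left_cancel₀ hs h1
  have h2' := mul_left_cancel₀ hs h2
  norm_cast at h0' h1' h2'
  simp [h0', h1', h2']

lemma norm_scaledPoint (v : ℤ × ℤ × ℤ) :
    ‖scaledPoint v‖ = Real.sqrt ((sqLen v : ℝ) / 18) := by
  rw [EuclideanSpace.norm_eq]
  congr 1
  have h2 : Real.sqrt 2 ^ 2 = 2 := Real.sq_sqrt (by norm_num)
  have hs : ((3 * Real.sqrt 2)⁻¹) ^ 2 = 1 / 18 := by
    rw [inv_pow, mul_pow, h2]; norm_num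
  simp only [scaledPoint, toE3, WithLp.equiv_symm_apply, Fin.sum_univ_three, Matrix.cons_val,
    Real.norm_eq_abs, sq_abs, mul_pow, hs, sqLen]
  push_cast
  ring

lemma norm_scaledPoint_eq_iff (v : ℤ × ℤ × ℤ) (n : ℤ) (t : ℝ) (ht : 0 ≤ t) (hn : t * 18 = n) :
    ‖scaledPoint v‖ = Real.sqrt t ↔ sqLen v = n := by
  have hv : (0 : ℝ) ≤ (sqLen v : ℝ) / 18 := by
    have : 0 ≤ sqLen v := by unfold sqLen; positivity
    positivity
  rw [norm_scaledPoint, Real.sqrt_inj hv ht, div_eq_iff (by norm_num), hn]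
  exact_mod_cast Iff.rfl

/-- `√2 = 2 / √2`: rewrites `b̃₃` in the same units as the other generators. -/
lemma sqrt_two_eq : Real.sqrt 2 = 2 * (Real.sqrt 2)⁻¹ := by
  have h2 : Real.sqrt 2 * Real.sqrt 2 = 2 := Real.mul_self_sqrt (by norm_num)
  field_simp
  linarith

lemma fcc_comb (a : Fin 3 → ℤ) :
    ∑ i, (a i : ℝ) • fccB i = scaledPoint (fccCoord (a 0, a 1, a 2)) := by
  ext i
  fin_cases i <;>
    simp [scaledPoint, fccCoord, fccB, toE3, Fin.sum_univ_three] <;> ring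

lemma hcp_comb (a : Fin 3 → ℤ) :
    (a 0 : ℝ) • fccB 0 + (a 1 : ℝ) • fccB 1 + (a 2 : ℝ) • tb3 =
      scaledPoint (hcpCoord (a 0, a 1, a 2)) := by
  have htb : tb3 = ((2 * (2 * (Real.sqrt 2)⁻¹)) / 3) • toE3 ![1, 1, -1] := by
    rw [← sqrt_two_eq]; rfl
  rw [htb]
  ext i
  fin_cases i <;> simp [scaledPoint, hcpCoord, fccB, toE3] <;> ring

lemma hcp_shift_comb (a : Fin 3 → ℤ) :
    fccB 2 + ((a 0 : ℝ) • fccB 0 + (a 1 : ℝ) • fccB 1 + (a 2 : ℝ) • tb3) =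
      scaledPoint (hcpShiftCoord (a 0, a 1, a 2)) := by
  rw [hcp_comb]
  ext i
  fin_cases i <;> simp [scaledPoint, hcpCoord, hcpShiftCoord, fccB, toE3] <;> ring

lemma mem_Lfcc_iff (x : E3) : x ∈ Lfcc ↔ ∃ a, x = scaledPoint (fccCoord a) := by
  constructor
  · rintro ⟨a, rfl⟩
    exact ⟨_, fcc_comb a⟩
  · rintro ⟨⟨a, b, c⟩, rfl⟩
    exact ⟨![a, b, c], (fcc_comb ![a, b, c]).symm⟩

lemma mem_Lhcp_iff (x : E3) :
    x ∈ Lhcp ↔ ∃ a, x = scaledPoint (hcpCoord a) ∨ x = scaledPoint (hcpShiftCoord a) := by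
  constructor
  · rintro ⟨a, h | h⟩
    · exact ⟨_, Or.inl (h.trans (hcp_comb a))⟩
    · exact ⟨_, Or.inr (h.trans (hcp_shift_comb a))⟩
  · rintro ⟨⟨a, b, c⟩, h | h⟩
    · exact ⟨![a, b, c], Or.inl (h.trans (hcp_comb ![a, b, c]).symm)⟩
    · exact ⟨![a, b, c], Or.inr (h.trans (hcp_shift_comb ![a, b, c]).symm)⟩

lemma mem_coeffBox_fcc (a : ℤ × ℤ × ℤ) (h : sqLen (fccCoord a) ≤ 54) : a ∈ coeffBox := by
  obtain ⟨a, b, c⟩ := a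
  simp only [sqLen, fccCoord] at h
  have key : (b + c) ^ 2 + (a + c) ^ 2 + (a + b) ^ 2 ≤ 6 := by nlinarith
  have bound {x y z : ℤ} (h : x ^ 2 + y ^ 2 + z ^ 2 ≤ 6) : -2 ≤ x ∧ x ≤ 2 := by
    constructor <;> nlinarith [sq_nonneg y, sq_nonneg z]
  have h1 := bound key
  have h2 := bound (x := a + c) (y := b + c) (z := a + b) (by linarith)
  have h3 := bound (x := a + b) (y := b + c) (z := a + c) (by linarith)
  simp only [coeffBox, Finset.mem_product, Finset.mem_Icc]
  omega

lemma mem_coeffBox_hcp (a : ℤ × ℤ × ℤ) (h : sqLen (hcpCoord a) ≤ 54) : a ∈ coeffBox := by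
  obtain ⟨a, b, c⟩ := a
  simp only [sqLen, hcpCoord] at h
  have key : 18 * (a ^ 2 + a * b + b ^ 2) + 48 * c ^ 2 ≤ 54 := by nlinarith
  simp only [coeffBox, Finset.mem_product, Finset.mem_Icc]
  refine ⟨⟨?_, ?_⟩, ⟨?_, ?_⟩, ?_, ?_⟩ <;>
    nlinarith [sq_nonneg (a + 2 * b), sq_nonneg (2 * a + b), sq_nonneg a, sq_nonneg b, sq_nonneg c]

lemma mem_coeffBox_hcpShift (a : ℤ × ℤ × ℤ) (h : sqLen (hcpShiftCoord a) ≤ 54) :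
    a ∈ coeffBox := by
  obtain ⟨a, b, c⟩ := a
  simp only [sqLen, hcpShiftCoord] at h
  have key : 18 * (a ^ 2 + a * b + b ^ 2 + a + b + 1) + 48 * (c ^ 2 + c) ≤ 54 := by nlinarith
  have hc : 0 ≤ c ^ 2 + c := by
    rcases le_or_gt 0 c with h | h <;> nlinarith
  have key' : a ^ 2 + a * b + b ^ 2 + a + b ≤ 2 := by nlinarith
  -- Completing the square: `4 (a² + ab + b² + a + b) = (a + 2b + 1)² + 3a² + 2a - 1`.
  have ha : 3 * a ^ 2 + 2 * a ≤ 9 := by nlinarith [sq_nonneg (a + 2 * b + 1)]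
  have hb : 3 * b ^ 2 + 2 * b ≤ 9 := by nlinarith [sq_nonneg (2 * a + b + 1)]
  have hc' : c ^ 2 + c ≤ 1 := by
    nlinarith [sq_nonneg (a + 2 * b + 1), sq_nonneg (3 * a + 1)]
  simp only [coeffBox, Finset.mem_product, Finset.mem_Icc]
  refine ⟨⟨?_, ?_⟩, ⟨?_, ?_⟩, ?_, ?_⟩ <;> nlinarith

lemma fcc_shell_eq (n : ℤ) (hn54 : n ≤ 54) (t : ℝ) (ht : 0 ≤ t) (hn : t * 18 = n) :
    {k | k ∈ Lfcc ∧ ‖k‖ = Real.sqrt t} = scaledPoint '' (fccShell n : Set (ℤ × ℤ × ℤ)) := by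
  ext x
  simp only [Set.mem_ofPred_eq, mem_Lfcc_iff, Set.mem_image, Finset.mem_coe, fccShell,
    Finset.mem_image, Finset.mem_filter]
  constructor
  · rintro ⟨⟨a, rfl⟩, h⟩
    rw [norm_scaledPoint_eq_iff _ n t ht hn] at h
    exact ⟨_, ⟨a, ⟨mem_coeffBox_fcc a (h.trans_le hn54), h⟩, rfl⟩, rfl⟩
  · rintro ⟨_, ⟨a, ⟨-, h⟩, rfl⟩, rfl⟩
    exact ⟨⟨a, rfl⟩, (norm_scaledPoint_eq_iff _ n t ht hn).2 h⟩

lemma hcp_shell_eq (n : ℤ) (hn54 : n ≤ 54) (t : ℝ) (ht : 0 ≤ t) (hn : t * 18 = n) :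
    {k | k ∈ Lhcp ∧ ‖k‖ = Real.sqrt t} = scaledPoint '' (hcpShell n : Set (ℤ × ℤ × ℤ)) := by
  ext x
  simp only [Set.mem_ofPred_eq, mem_Lhcp_iff, Set.mem_image, Finset.mem_coe, hcpShell,
    Finset.mem_union, Finset.mem_image, Finset.mem_filter]
  constructor
  · rintro ⟨⟨a, rfl | rfl⟩, h⟩ <;> rw [norm_scaledPoint_eq_iff _ n t ht hn] at h
    · exact ⟨_, Or.inl ⟨a, ⟨mem_coeffBox_hcp a (h.trans_le hn54), h⟩, rfl⟩, rfl⟩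
    · exact ⟨_, Or.inr ⟨a, ⟨mem_coeffBox_hcpShift a (h.trans_le hn54), h⟩, rfl⟩, rfl⟩
  · rintro ⟨_, ⟨a, ⟨-, h⟩, rfl⟩ | ⟨a, ⟨-, h⟩, rfl⟩, rfl⟩
    · exact ⟨⟨a, Or.inl rfl⟩, (norm_scaledPoint_eq_iff _ n t ht hn).2 h⟩
    · exact ⟨⟨a, Or.inr rfl⟩, (norm_scaledPoint_eq_iff _ n t ht hn).2 h⟩

/-- Shell-count differences between the fcc and hcp lattices at radii `√(8/3)` and `√3`:
fcc has no point of norm `√(8/3)` while hcp has exactly 2 (difference `−2`), and fcc has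
exactly 24 points of norm `√3` while hcp has exactly 18 (difference `6`). -/
theorem fcc_hcp_shell_differences :
    ({k | k ∈ Lfcc ∧ ‖k‖ = Real.sqrt (8/3)}).ncard = 0 ∧
    ({k | k ∈ Lhcp ∧ ‖k‖ = Real.sqrt (8/3)}).ncard = 2 ∧
    ({k | k ∈ Lfcc ∧ ‖k‖ = Real.sqrt 3}).ncard = 24 ∧
    ({k | k ∈ Lhcp ∧ ‖k‖ = Real.sqrt 3}).ncard = 18 ∧
    (({k | k ∈ Lfcc ∧ ‖k‖ = Real.sqrt (8/3)}).ncard : ℤ) -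
      (({k | k ∈ Lhcp ∧ ‖k‖ = Real.sqrt (8/3)}).ncard : ℤ) = -2 ∧
    (({k | k ∈ Lfcc ∧ ‖k‖ = Real.sqrt 3}).ncard : ℤ) -
      (({k | k ∈ Lhcp ∧ ‖k‖ = Real.sqrt 3}).ncard : ℤ) = 6 := by
  have f1 : ({k | k ∈ Lfcc ∧ ‖k‖ = Real.sqrt (8/3)}).ncard = 0 := by
    rw [fcc_shell_eq 48 (by norm_num) (8/3) (by norm_num) (by norm_num),
      Set.ncard_image_of_injective _ scaledPoint_injective, Set.ncard_coe_finset]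
    decide +kernel
  have h1 : ({k | k ∈ Lhcp ∧ ‖k‖ = Real.sqrt (8/3)}).ncard = 2 := by
    rw [hcp_shell_eq 48 (by norm_num) (8/3) (by norm_num) (by norm_num),
      Set.ncard_image_of_injective _ scaledPoint_injective, Set.ncard_coe_finset]
    decide +kernel
  have f2 : ({k | k ∈ Lfcc ∧ ‖k‖ = Real.sqrt 3}).ncard = 24 := by
    rw [fcc_shell_eq 54 (by norm_num) 3 (by norm_num) (by norm_num),
      Set.ncard_image_of_injective _ scaledPoint_injective, Set.ncard_coe_finset]
    decide +kernel
  have h2 : ({k | k ∈ Lhcp ∧ ‖k‖ = Real.sqrt 3}).ncard = 18 := by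
    rw [hcp_shell_eq 54 (by norm_num) 3 (by norm_num) (by norm_num),
      Set.ncard_image_of_injective _ scaledPoint_injective, Set.ncard_coe_finset]
    decide +kernel
  refine ⟨f1, h1, f2, h2, ?_, ?_⟩
  · rw [f1, h1]; norm_num
  · rw [f2, h2]; norm_num

end
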